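/- Let P_1 ∈ A^{k_1×k_2} and P_2 ∈ A^{k_2×k_3}. If the sequence (E')^{k_3} →(P_2•) (E')^{k_2} →(P_1•) (E')^{k_1} is exact (i.e., im_{E'}(P_2•) = ker_{E'}(P_1•)), then the σ(E^{1×k_2}, (E')^{k_2})-closure of the image of •P_1 : E^{1×k_1} → E^{1×k_2} equals the kernel of •P_2 : E^{1×k_2} → E^{1×k_3}. -/

import Mathlib

/-- Right multiplication `x ↦ x P` by the matrix `P ∈ A^{q×r}` on row vectors
`x ∈ A^{1×q}`: `(x P) j = ∑ i, x i * P i j`. -/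
def rmulA {A : Type*} [Ring A] {q r : ℕ} (P : Matrix (Fin q) (Fin r) A) :
    (Fin q → A) → (Fin r → A) :=
  fun x j => ∑ i, x i * P i j

/-- Right multiplication `x ↦ x P` by the matrix `P ∈ A^{q×r}` on row vectors
`x ∈ E^{1×q}` with entries in a right `A`-module `E` (the right action of `A` on `E`
being encoded as a left `Aᵐᵒᵖ`-action): `(x P) j = ∑ i, x i • P i j`. -/
def rmulE {A E : Type*} [Ring A] [AddCommGroup E] [Module Aᵐᵒᵖ E] {q r : ℕ}
    (P : Matrix (Fin q) (Fin r) A) : (Fin q → E) → (Fin r → E) :=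
  fun x j => ∑ i, MulOpposite.op (P i j) • x i

/-- Left multiplication `x' ↦ P x'` by the matrix `P ∈ A^{q×r}` on column vectors
`x' ∈ (E')^r` with entries in a left `A`-module `E'`: `(P x') i = ∑ j, P i j • x' j`. -/
def lmulE' {A E' : Type*} [Ring A] [AddCommGroup E'] [Module A E'] {q r : ℕ}
    (P : Matrix (Fin q) (Fin r) A) : (Fin r → E') → (Fin q → E') :=
  fun x' i => ∑ j, P i j • x' j

/-- The weak topology on `X` determined by a pairing `B : X → Y → 𝕜`,
i.e. the coarsest topology making every map `x ↦ B x y` (`y ∈ Y`) continuous. -/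
noncomputable def weakTopology {𝕜 X Y : Type*} [TopologicalSpace 𝕜]
    (B : X → Y → 𝕜) : TopologicalSpace X :=
  TopologicalSpace.induced B Pi.topologicalSpace

/-- Flatness of the right `A`-module `E` (`A` not necessarily commutative), expressed
by the standard equational criterion: every relation `∑ i, x i • a i = 0` in `E`
comes from relations in `A`. -/
def RightFlat (A E : Type*) [Ring A] [AddCommGroup E] [Module Aᵐᵒᵖ E] : Prop :=
  ∀ (q : ℕ) (a : Fin q → A) (x : Fin q → E),
    ∑ i, MulOpposite.op (a i) • x i = 0 →
    ∃ (r : ℕ) (y : Fin r → E) (Q : Matrix (Fin r) (Fin q) A),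
      (∀ j, ∑ i, Q j i * a i = 0) ∧ ∀ i, x i = ∑ j, MulOpposite.op (Q j i) • y j

/-- The weak topology `σ(E^{1×k}, (E')^k)` on `E^{1×k}` determined by the componentwise
extension `⟨x, x'⟩ = ∑ i, ⟨x i, x' i⟩` of the duality bracket `B` to `E^{1×k} × (E')^k`. -/
noncomputable def sigmaRow {𝕜 E E' : Type*} [RCLike 𝕜] [AddCommGroup E] [Module 𝕜 E]
    [AddCommGroup E'] [Module 𝕜 E'] (B : E →ₗ[𝕜] E' →ₗ[𝕜] 𝕜) (k : ℕ) :
    TopologicalSpace (Fin k → E) :=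
  weakTopology fun (x : Fin k → E) (x' : Fin k → E') => ∑ i, B (x i) (x' i)

/-- The weak topology `σ((E')^k, E^{1×k})` on `(E')^k` determined by the componentwise
extension `⟨x, x'⟩ = ∑ i, ⟨x i, x' i⟩` of the duality bracket `B` to `E^{1×k} × (E')^k`. -/
noncomputable def sigmaCol {𝕜 E E' : Type*} [RCLike 𝕜] [AddCommGroup E] [Module 𝕜 E]
    [AddCommGroup E'] [Module 𝕜 E'] (B : E →ₗ[𝕜] E' →ₗ[𝕜] 𝕜) (k : ℕ) :
    TopologicalSpace (Fin k → E') :=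
  weakTopology fun (x' : Fin k → E') (x : Fin k → E) => ∑ i, B (x i) (x' i)

/-!
A subspace of `X` and its bipolar have the same image under each finite family of functionals
`B · y`, so the weak closure of a subspace is its bipolar. The polar of `im (•P₁)` is
`ker (P₁•)`, because the pairing separates points and `•P₁`, `P₁•` are transposes of each other.
By exactness this is `im (P₂•)`, whose polar is `ker (•P₂)`.
-/

section WeakClosure

open scoped Topology

theorem continuous_weakTopology_eval {𝕜 X Y : Type*} [TopologicalSpace 𝕜] (B : X → Y → 𝕜)
    (y : Y) : Continuous[weakTopology B, inferInstance] fun x ↦ B x y := by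
  let := weakTopology B
  exact (continuous_apply y).comp continuous_induced_dom

theorem mem_closure_weakTopology_of_forall_finset {𝕜 X Y : Type*} [TopologicalSpace 𝕜]
    {B : X → Y → 𝕜} {s : Set X} {x : X}
    (h : ∀ I : Finset Y, ∃ m ∈ s, ∀ y ∈ I, B m y = B x y) :
    x ∈ closure[weakTopology B] s := by
  rw [weakTopology, closure_induced, mem_closure_iff]
  intro U hU hxU
  obtain ⟨I, u, hu, huU⟩ := isOpen_pi_iff.1 hU _ hxU
  obtain ⟨m, hms, hm⟩ := h I
  refine ⟨B m, huU fun y hy ↦ ?_, m, hms, rfl⟩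
  rw [hm y hy]
  exact (hu y hy).2

variable {𝕜 X Y : Type*} [Field 𝕜] [AddCommGroup X] [Module 𝕜 X] [AddCommGroup Y] [Module 𝕜 Y]

theorem exists_comp_pi_flip_eq_flip (B : X →ₗ[𝕜] Y →ₗ[𝕜] 𝕜) {ι : Type*} [Finite ι]
    (v : ι → Y) (φ : (ι → 𝕜) →ₗ[𝕜] 𝕜) :
    ∃ y, φ ∘ₗ LinearMap.pi (fun i ↦ B.flip (v i)) = B.flip y := by
  have := Fintype.ofFinite ι
  obtain ⟨c, rfl⟩ := (Module.piEquiv ι 𝕜 𝕜).surjective φ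
  exact ⟨∑ i, c i • v i, LinearMap.ext fun x ↦ by simp [Module.piEquiv_apply_apply, mul_comm]⟩

theorem exists_mem_eqOn_finset_of_mem_bipolar {B : X →ₗ[𝕜] Y →ₗ[𝕜] 𝕜} {M : Submodule 𝕜 X}
    {x : X} (hx : x ∈ (M.orthogonalBilin B).orthogonalBilin B.flip) (I : Finset Y) :
    ∃ m ∈ M, ∀ y ∈ I, B m y = B x y := by
  let T : X →ₗ[𝕜] (I → 𝕜) := LinearMap.pi fun y ↦ B.flip y
  suffices hTx : T x ∈ M.map T by
    obtain ⟨m, hm, hmx⟩ := hTx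
    exact ⟨m, hm, fun y hy ↦ congrFun hmx ⟨y, hy⟩⟩
  by_contra hTx
  obtain ⟨φ, hφx, hφM⟩ := Submodule.exists_le_ker_of_notMem hTx
  obtain ⟨y, hy⟩ := exists_comp_pi_flip_eq_flip B (fun y : I ↦ (y : Y)) φ
  have hyM : y ∈ M.orthogonalBilin B := fun m hm ↦
    (LinearMap.congr_fun hy m).symm.trans (hφM (Submodule.mem_map_of_mem hm))
  exact hφx ((LinearMap.congr_fun hy x).trans (hx y hyM))

variable [TopologicalSpace 𝕜] [T1Space 𝕜]

theorem closure_weakTopology_eq_bipolar (B : X →ₗ[𝕜] Y →ₗ[𝕜] 𝕜) (M : Submodule 𝕜 X) :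
    closure[weakTopology fun x y ↦ B x y] (M : Set X) =
      (M.orthogonalBilin B).orthogonalBilin B.flip := by
  let := weakTopology fun x y ↦ B x y
  refine Set.Subset.antisymm (fun x hx y hy ↦ ?_) fun x hx ↦
    mem_closure_weakTopology_of_forall_finset (exists_mem_eqOn_finset_of_mem_bipolar hx)
  have hclosed : IsClosed {x | B x y = 0} :=
    isClosed_singleton.preimage (continuous_weakTopology_eval (fun x y ↦ B x y) y)
  exact closure_minimal (fun m hm ↦ hy m hm) hclosed hx

end WeakClosure

section TransposePair

variable {R X₁ X₂ Y₁ Y₂ : Type*} [CommSemiring R]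
  [AddCommMonoid X₁] [Module R X₁] [AddCommMonoid Y₁] [Module R Y₁]
  [AddCommMonoid X₂] [Module R X₂] [AddCommMonoid Y₂] [Module R Y₂]

/-- `f : X₁ → X₂` and `f' : Y₂ → Y₁` are transposes of each other for the pairings `B₁` on
`X₁ × Y₁` and `B₂` on `X₂ × Y₂`; `LinearMap.IsAdjointPair` is the case `X₁ = Y₁`, `X₂ = Y₂`. -/
def IsTransposePair (B₁ : X₁ →ₗ[R] Y₁ →ₗ[R] R) (B₂ : X₂ →ₗ[R] Y₂ →ₗ[R] R) (f : X₁ → X₂)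
    (f' : Y₂ → Y₁) : Prop :=
  ∀ x y, B₂ (f x) y = B₁ x (f' y)

variable {B₁ : X₁ →ₗ[R] Y₁ →ₗ[R] R} {B₂ : X₂ →ₗ[R] Y₂ →ₗ[R] R} {f : X₁ → X₂} {f' : Y₂ → Y₁}

theorem IsTransposePair.flip (hf : IsTransposePair B₁ B₂ f f') :
    IsTransposePair B₂.flip B₁.flip f' f :=
  fun y x ↦ (hf x y).symm

theorem IsTransposePair.apply_eq_zero_iff (hf : IsTransposePair B₁ B₂ f f')
    (hB₂ : B₂.SeparatingLeft) (x : X₁) : f x = 0 ↔ ∀ y, B₁ x (f' y) = 0 := by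
  simp only [← hf x]
  exact ⟨fun h y ↦ by rw [h, map_zero, LinearMap.zero_apply], hB₂ (f x)⟩

end TransposePair

section ExactTransposes

open scoped Topology

variable {𝕜 X₁ X₂ X₃ Y₁ Y₂ Y₃ : Type*} [Field 𝕜]
  [AddCommGroup X₁] [Module 𝕜 X₁] [AddCommGroup Y₁] [Module 𝕜 Y₁]
  [AddCommGroup X₂] [Module 𝕜 X₂] [AddCommGroup Y₂] [Module 𝕜 Y₂]
  [AddCommGroup X₃] [Module 𝕜 X₃] [AddCommGroup Y₃] [Module 𝕜 Y₃]
  {B₁ : X₁ →ₗ[𝕜] Y₁ →ₗ[𝕜] 𝕜} {B₂ : X₂ →ₗ[𝕜] Y₂ →ₗ[𝕜] 𝕜} {B₃ : X₃ →ₗ[𝕜] Y₃ →ₗ[𝕜] 𝕜}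

theorem IsTransposePair.mem_orthogonalBilin_range_iff {f : X₁ →ₗ[𝕜] X₂} {f' : Y₂ → Y₁}
    (hf : IsTransposePair B₁ B₂ f f') (hB₁ : B₁.SeparatingRight) (y : Y₂) :
    y ∈ f.range.orthogonalBilin B₂ ↔ f' y = 0 := by
  rw [hf.flip.apply_eq_zero_iff (LinearMap.flip_separatingLeft.2 hB₁)]
  exact Set.forall_mem_range

theorem closure_range_eq_ker_of_exact_transpose [TopologicalSpace 𝕜] [T1Space 𝕜]
    {f : X₁ →ₗ[𝕜] X₂} {g : X₂ → X₃} {f' : Y₂ → Y₁} {g' : Y₃ → Y₂}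
    (hf : IsTransposePair B₁ B₂ f f') (hg : IsTransposePair B₂ B₃ g g')
    (hB₁ : B₁.SeparatingRight) (hB₃ : B₃.SeparatingLeft) (hexact : Function.Exact g' f') :
    closure[weakTopology fun x y ↦ B₂ x y] (Set.range f) = {x | g x = 0} := by
  rw [← LinearMap.coe_range, closure_weakTopology_eq_bipolar]
  ext x
  calc (∀ y ∈ f.range.orthogonalBilin B₂, B₂ x y = 0)
      ↔ ∀ y, f' y = 0 → B₂ x y = 0 := by
        simp only [hf.mem_orthogonalBilin_range_iff hB₁]
    _ ↔ ∀ z, B₂ x (g' z) = 0 := by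
        simp only [hexact _, Set.forall_mem_range]
    _ ↔ g x = 0 := (hg.apply_eq_zero_iff hB₃ x).symm

end ExactTransposes

section PiPairing

variable {R E E' : Type*} [CommSemiring R] [AddCommMonoid E] [Module R E]
  [AddCommMonoid E'] [Module R E'] (B : E →ₗ[R] E' →ₗ[R] R) (ι : Type*) [Fintype ι]

/-- The componentwise extension `⟨x, x'⟩ = ∑ i, ⟨x i, x' i⟩` of a duality bracket to families,
bundled as a bilinear map. -/
def piPairing : (ι → E) →ₗ[R] (ι → E') →ₗ[R] R :=
  LinearMap.mk₂ R (fun x x' ↦ ∑ i, B (x i) (x' i))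
    (by simp [Finset.sum_add_distrib]) (by simp [Finset.mul_sum])
    (by simp [Finset.sum_add_distrib]) (by simp [Finset.mul_sum])

variable {ι}

theorem piPairing_apply (x : ι → E) (x' : ι → E') :
    piPairing B ι x x' = ∑ i, B (x i) (x' i) :=
  rfl

theorem piPairing_single_right [DecidableEq ι] (x : ι → E) (i : ι) (x' : E') :
    piPairing B ι x (Pi.single i x') = B (x i) x' := by
  rw [piPairing_apply, Finset.sum_eq_single_of_mem i (Finset.mem_univ i), Pi.single_eq_same]
  intro j _ hj
  rw [Pi.single_eq_of_ne hj, map_zero]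

theorem piPairing_flip : (piPairing B ι).flip = piPairing B.flip ι :=
  LinearMap.ext₂ fun x' x ↦ by simp only [LinearMap.flip_apply, piPairing_apply]

variable {B}

theorem piPairing_separatingLeft (hB : B.SeparatingLeft) : (piPairing B ι).SeparatingLeft := by
  classical
  refine fun x hx ↦ funext fun i ↦ hB (x i) fun x' ↦ ?_
  rw [← piPairing_single_right, hx]

theorem piPairing_separatingRight (hB : B.SeparatingRight) :
    (piPairing B ι).SeparatingRight := by
  rw [← LinearMap.flip_separatingLeft] at hB ⊢
  rw [piPairing_flip]
  exact piPairing_separatingLeft hB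

end PiPairing

section MatrixMultiplication

theorem isTransposePair_rmulE_lmulE' {R A E E' : Type*} [CommSemiring R] [Ring A]
    [AddCommGroup E] [Module R E] [AddCommGroup E'] [Module R E']
    [Module A E'] [Module Aᵐᵒᵖ E] {B : E →ₗ[R] E' →ₗ[R] R}
    (hcomp : ∀ (x : E) (a : A) (x' : E'), B (MulOpposite.op a • x) x' = B x (a • x'))
    {q r : ℕ} (P : Matrix (Fin q) (Fin r) A) :
    IsTransposePair (piPairing B (Fin q)) (piPairing B (Fin r))
      (rmulE P) (lmulE' P) := by
  intro x x'
  simp only [piPairing_apply, rmulE, lmulE', map_sum, LinearMap.sum_apply, hcomp]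
  exact Finset.sum_comm

/-- The map `•P : E^{1×q} → E^{1×r}` of `rmulE`, bundled as a linear map over the ground ring. -/
def rmulELinearMap (R : Type*) {A E : Type*} [Semiring R] [Ring A] [AddCommGroup E] [Module R E]
    [Module Aᵐᵒᵖ E] [SMulCommClass R Aᵐᵒᵖ E] {q r : ℕ} (P : Matrix (Fin q) (Fin r) A) :
    (Fin q → E) →ₗ[R] (Fin r → E) where
  toFun := rmulE P
  map_add' x y := funext fun j ↦ by simp [rmulE, Finset.sum_add_distrib]
  map_smul' c x := funext fun j ↦ by simp [rmulE, Finset.smul_sum, smul_comm c]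

end MatrixMultiplication

theorem closure_image_eq_ker_of_exact_dual_general
    {𝕜 A E E' : Type*} [Field 𝕜] [TopologicalSpace 𝕜] [T1Space 𝕜] [Ring A]
    [AddCommGroup E] [Module 𝕜 E] [AddCommGroup E'] [Module 𝕜 E']
    [Module A E'] [Module Aᵐᵒᵖ E] [SMulCommClass 𝕜 Aᵐᵒᵖ E]
    {B : E →ₗ[𝕜] E' →ₗ[𝕜] 𝕜} (hleft : B.SeparatingLeft) (hright : B.SeparatingRight)
    (hcomp : ∀ (x : E) (a : A) (x' : E'), B (MulOpposite.op a • x) x' = B x (a • x'))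
    {k₁ k₂ k₃ : ℕ} {P₁ : Matrix (Fin k₁) (Fin k₂) A} {P₂ : Matrix (Fin k₂) (Fin k₃) A}
    (hexact : Function.Exact (lmulE' (E' := E') P₂) (lmulE' (E' := E') P₁)) :
    @closure _ (weakTopology fun (x : Fin k₂ → E) (x' : Fin k₂ → E') ↦ ∑ i, B (x i) (x' i))
      (Set.range (rmulE (E := E) P₁)) = {x : Fin k₂ → E | rmulE P₂ x = 0} :=
  closure_range_eq_ker_of_exact_transpose (f := rmulELinearMap 𝕜 P₁)
    (isTransposePair_rmulE_lmulE' hcomp P₁) (isTransposePair_rmulE_lmulE' hcomp P₂)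
    (piPairing_separatingRight hright) (piPairing_separatingLeft hleft) hexact

/-- If `(E')^{k₃} →(P₂•) (E')^{k₂} →(P₁•) (E')^{k₁}` is exact, then the
`σ(E^{1×k₂}, (E')^{k₂})`-closure of `im_E(•P₁)` equals `ker_E(•P₂)`. -/
theorem closure_image_eq_ker_of_exact_dual
    {𝕜 : Type} [RCLike 𝕜] {A : Type} [Ring A] [IsDomain A] [Algebra 𝕜 A]
    [IsNoetherianRing A] [IsNoetherianRing Aᵐᵒᵖ]
    {E E' : Type} [AddCommGroup E] [Module 𝕜 E] [AddCommGroup E'] [Module 𝕜 E']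
    [Module A E'] [IsScalarTower 𝕜 A E'] [SMulCommClass 𝕜 A E']
    [Module Aᵐᵒᵖ E] [IsScalarTower 𝕜 Aᵐᵒᵖ E] [SMulCommClass 𝕜 Aᵐᵒᵖ E]
    (B : E →ₗ[𝕜] E' →ₗ[𝕜] 𝕜)
    (hB₁ : ∀ x : E, (∀ x' : E', B x x' = 0) → x = 0)
    (hB₂ : ∀ x' : E', (∀ x : E, B x x' = 0) → x' = 0)
    (hsemi : ∀ a : A, @Continuous E' E' (weakTopology fun x' x => B x x')
      (weakTopology fun x' x => B x x') (fun x' => a • x'))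
    (hcomp : ∀ (x : E) (a : A) (x' : E'), B (MulOpposite.op a • x) x' = B x (a • x'))
    (k₁ k₂ k₃ : ℕ) (P₁ : Matrix (Fin k₁) (Fin k₂) A) (P₂ : Matrix (Fin k₂) (Fin k₃) A)
    (hexact : Function.Exact (lmulE' (E' := E') P₂) (lmulE' (E' := E') P₁)) :
    @closure _ (sigmaRow B k₂) (Set.range (rmulE (E := E) P₁)) =
      {x : Fin k₂ → E | rmulE P₂ x = 0} :=
  closure_image_eq_ker_of_exact_dual_general hB₁ hB₂ hcomp hexact
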